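/- Let ρ and σ be density operators on a finite-dimensional Hilbert space. For any sequence {p_n} of orthogonal projections p_n on H^{⊗n} with liminf_{n→∞} tr(ρ^{⊗n} p_n) > 0, it holds that liminf_{n→∞} (1/n) log tr(σ^{⊗n} p_n) ≥ −S(ρ,σ), where S(ρ,σ) is the quantum relative entropy (base 2), possibly infinite. -/

import Mathlib

open Filter
open scoped ComplexOrder Classical

/-- `n`-fold tensor power of a `d×d` matrix, realized on the index set `Fin n → Fin d`. -/
noncomputable def tpow {d : ℕ} (ρ : Matrix (Fin d) (Fin d) ℂ) (n : ℕ) :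
    Matrix (Fin n → Fin d) (Fin n → Fin d) ℂ :=
  Matrix.of fun x y => ∏ i, ρ (x i) (y i)

/-- Base-2 functional calculus logarithm of a Hermitian matrix, with the convention
`log 0 = 0` on the kernel (and junk value `0` on non-Hermitian matrices). -/
noncomputable def matLog2 {m : Type*} [Fintype m] [DecidableEq m]
    (ρ : Matrix m m ℂ) : Matrix m m ℂ :=
  if h : ρ.IsHermitian then
    (h.eigenvectorUnitary : Matrix m m ℂ) *
      Matrix.diagonal (fun i => (Real.logb 2 (h.eigenvalues i) : ℂ)) *
      (star (h.eigenvectorUnitary : Matrix m m ℂ))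
  else 0

/-- Quantum relative entropy `S(ρ,σ) = tr ρ (log ρ − log σ)` (base 2); this real-valued
formula is meaningful when `supp ρ ≤ supp σ`. -/
noncomputable def qRelEnt {m : Type*} [Fintype m] [DecidableEq m]
    (ρ σ : Matrix m m ℂ) : ℝ :=
  ((ρ * (matLog2 ρ - matLog2 σ)).trace).re

/-- Support condition `supp ρ ≤ supp σ` (for PSD matrices: `ker σ ⊆ ker ρ`). -/
def SuppLe {m : Type*} [Fintype m] (ρ σ : Matrix m m ℂ) : Prop :=
  ∀ v, σ.mulVec v = 0 → ρ.mulVec v = 0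

/-- Quantum relative entropy with value `⊤` when `supp ρ ≤ supp σ` fails. -/
noncomputable def qRelEntE {m : Type*} [Fintype m] [DecidableEq m]
    (ρ σ : Matrix m m ℂ) : EReal :=
  if SuppLe ρ σ then ((qRelEnt ρ σ : ℝ) : EReal) else ⊤

/-- Von Neumann entropy (base 2). -/
noncomputable def vNent {m : Type*} [Fintype m] [DecidableEq m]
    (ρ : Matrix m m ℂ) : ℝ :=
  if h : ρ.IsHermitian then -∑ i, (h.eigenvalues i) * Real.logb 2 (h.eigenvalues i) else 0

/-- Density operator. -/
def IsDensity {m : Type*} [Fintype m] (ρ : Matrix m m ℂ) : Prop :=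
  ρ.PosSemidef ∧ ρ.trace = 1

/-- Orthogonal projection. -/
def IsProjn {m : Type*} [Fintype m] (p : Matrix m m ℂ) : Prop :=
  p.IsHermitian ∧ p * p = p

/-- Base-2 logarithm with value `⊥` at nonpositive reals. -/
noncomputable def elog2 (t : ℝ) : EReal := if t ≤ 0 then ⊥ else ((Real.logb 2 t : ℝ) : EReal)

/-! Fix spectral decompositions of `ρ` and `σ`. By the weak law of large numbers, all but a
vanishing part of `ρ^{⊗n}` lies on its eigenvalues at most `α = 2 ^ (n (tr ρ log ρ + ε))`, and in
the state `ρ^{⊗n}` the spectral projection `F` of `σ^{⊗n}` onto the eigenvalues at least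
`β = 2 ^ (n (tr ρ log σ - ε))` has probability tending to `1`. The pinching inequality
`p ≤ 2 F p F + 2 (1 - F)` then reduces `tr (ρ^{⊗n} p)` to `tr (ρ^{⊗n} F p F)`, up to a factor `2`
and a vanishing error, and since `β F ≤ σ^{⊗n}` this is at most
`α tr (F p) ≤ (α / β) tr (σ^{⊗n} p)`, where `α / β = 2 ^ (n (S(ρ,σ) + 2 ε))`. -/

open Matrix
open scoped MatrixOrder

section WeakLaw

variable {ι : Type*} [Fintype ι]

theorem exists_pos_sum_mul_exp_lt_one {w f : ι → ℝ} (hw1 : ∑ i, w i = 1)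
    (hf : ∑ i, w i * f i < 0) : ∃ s : ℝ, 0 < s ∧ ∑ i, w i * Real.exp (s * f i) < 1 := by
  have hderiv : HasDerivAt (fun s : ℝ => ∑ i, w i * Real.exp (s * f i)) (∑ i, w i * f i) 0 := by
    refine (HasDerivAt.fun_sum fun i _ =>
      (((hasDerivAt_id (0 : ℝ)).mul_const (f i)).exp).const_mul (w i)).congr_deriv ?_
    simp
  obtain ⟨s, hslope, hs : 0 < s⟩ :=
    ((hderiv.tendsto_slope_zero_right.eventually (gt_mem_nhds hf)).and self_mem_nhdsWithin).exists
  refine ⟨s, hs, ?_⟩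
  simp only [zero_add, zero_mul, Real.exp_zero, mul_one, hw1, smul_eq_mul] at hslope
  linarith [(inv_mul_lt_iff₀ hs).1 hslope]

theorem sum_prod_le_pow_sum_mul_exp {w f : ι → ℝ} (hw : ∀ i, 0 ≤ w i) {s : ℝ} (hs : 0 ≤ s) {n : ℕ}
    {S : Finset (Fin n → ι)} (hS : ∀ x ∈ S, (∀ i, w (x i) ≠ 0) → 0 ≤ ∑ i, f (x i)) :
    ∑ x ∈ S, ∏ i, w (x i) ≤ (∑ i, w i * Real.exp (s * f i)) ^ n := by
  have hprod (x : Fin n → ι) : 0 ≤ ∏ i, w (x i) * Real.exp (s * f (x i)) :=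
    Finset.prod_nonneg fun i _ => mul_nonneg (hw _) (Real.exp_pos _).le
  calc ∑ x ∈ S, ∏ i, w (x i)
      ≤ ∑ x ∈ S, ∏ i, w (x i) * Real.exp (s * f (x i)) := by
        refine Finset.sum_le_sum fun x hx => ?_
        by_cases h0 : ∀ i, w (x i) ≠ 0
        · rw [Finset.prod_mul_distrib, ← Real.exp_sum, ← Finset.mul_sum]
          exact le_mul_of_one_le_right (Finset.prod_nonneg fun i _ => hw _)
            (Real.one_le_exp (mul_nonneg hs (hS x hx h0)))
        · push Not at h0
          obtain ⟨i, hi⟩ := h0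
          exact (Finset.prod_eq_zero (Finset.mem_univ i) hi).trans_le (hprod x)
    _ ≤ ∑ x : Fin n → ι, ∏ i, w (x i) * Real.exp (s * f (x i)) :=
        Finset.sum_le_sum_of_subset_of_nonneg (Finset.subset_univ S) fun x _ _ => hprod x
    _ = (∑ i, w i * Real.exp (s * f i)) ^ n := by rw [Fintype.sum_pow]

theorem tendsto_sum_prod_of_mean_lt {w g : ι → ℝ} (hw : ∀ i, 0 ≤ w i) (hw1 : ∑ i, w i = 1) {a : ℝ}
    (ha : ∑ i, w i * g i < a) {S : (n : ℕ) → Finset (Fin n → ι)}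
    (hS : ∀ n, ∀ x ∈ S n, (∀ i, w (x i) ≠ 0) → n * a ≤ ∑ i, g (x i)) :
    Tendsto (fun n => ∑ x ∈ S n, ∏ i, w (x i)) atTop (nhds 0) := by
  have hmean : ∑ i, w i * (g i - a) < 0 := by
    simp only [mul_sub, Finset.sum_sub_distrib, ← Finset.sum_mul, hw1]
    linarith
  obtain ⟨s, hs, hlt⟩ := exists_pos_sum_mul_exp_lt_one hw1 hmean
  have hnonneg : 0 ≤ ∑ i, w i * Real.exp (s * (g i - a)) :=
    Finset.sum_nonneg fun i _ => mul_nonneg (hw i) (Real.exp_pos _).le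
  refine squeeze_zero (fun n => Finset.sum_nonneg fun x _ => Finset.prod_nonneg fun i _ => hw _)
    (fun n => sum_prod_le_pow_sum_mul_exp hw hs.le fun x hx h0 => ?_)
    (tendsto_pow_atTop_nhds_zero_of_lt_one hnonneg hlt)
  simpa [Finset.sum_sub_distrib] using hS n x hx h0

theorem tendsto_sum_prod_of_rpow_lt_prod {v s : ι → ℝ} (hv : ∀ i, 0 ≤ v i) (hv1 : ∑ i, v i = 1)
    {a : ℝ} (ha : ∑ i, v i * Real.logb 2 (s i) < a) :
    Tendsto (fun n : ℕ => ∑ x : Fin n → ι with (2 : ℝ) ^ (n * a) < ∏ i, s (x i), ∏ i, v (x i))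
      atTop (nhds 0) := by
  refine tendsto_sum_prod_of_mean_lt hv hv1 ha fun n x hx _ => ?_
  have hlt : (2 : ℝ) ^ (n * a) < ∏ i, s (x i) := (Finset.mem_filter_univ x).1 hx
  have hpos : 0 < ∏ i, s (x i) := (Real.rpow_pos_of_pos two_pos _).trans hlt
  rw [← Real.logb_prod _ _ (Finset.prod_ne_zero_iff.1 hpos.ne')]
  exact ((Real.lt_logb_iff_rpow_lt one_lt_two hpos).2 hlt).le

theorem tendsto_sum_prod_of_prod_lt_rpow {v s : ι → ℝ} (hv : ∀ i, 0 ≤ v i) (hv1 : ∑ i, v i = 1)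
    (hs : ∀ i, 0 ≤ s i) (hsv : ∀ i, s i = 0 → v i = 0) {a : ℝ}
    (ha : a < ∑ i, v i * Real.logb 2 (s i)) :
    Tendsto (fun n : ℕ => ∑ x : Fin n → ι with ∏ i, s (x i) < (2 : ℝ) ^ (n * a), ∏ i, v (x i))
      atTop (nhds 0) := by
  have hmean : ∑ i, v i * -Real.logb 2 (s i) < -a := by simpa using ha
  refine tendsto_sum_prod_of_mean_lt hv hv1 hmean fun n x hx h0 => ?_
  have hlt : ∏ i, s (x i) < (2 : ℝ) ^ (n * a) := (Finset.mem_filter_univ x).1 hx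
  have hpos : ∀ i, 0 < s (x i) := fun i => (hs _).lt_of_ne' fun h => h0 i (hsv _ h)
  rw [Finset.sum_neg_distrib, ← Real.logb_prod _ _ fun i _ => (hpos i).ne', mul_neg, neg_le_neg_iff]
  exact ((Real.logb_lt_iff_lt_rpow one_lt_two (Finset.prod_pos fun i _ => hpos i)).2 hlt).le

end WeakLaw

section OneShot

theorem conjugate_add_le {R : Type*} [Ring R] [PartialOrder R] [StarRing R] [StarOrderedRing R]
    {p : R} (hp : 0 ≤ p) (a b : R) :
    star (a + b) * p * (a + b) ≤ 2 * (star a * p * a) + 2 * (star b * p * b) := by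
  rw [← sub_nonneg]
  convert star_left_conjugate_nonneg hp (a - b) using 1
  simp only [star_add, star_sub]
  noncomm_ring

theorem le_two_mul_conjugate_add_two_mul_one_sub {R : Type*} [Ring R] [PartialOrder R]
    [StarRing R] [StarOrderedRing R] {p F : R} (hp0 : 0 ≤ p) (hp1 : p ≤ 1)
    (hF : IsStarProjection F) : p ≤ 2 * (F * p * F) + 2 * (1 - F) := by
  have hF' := hF.one_sub
  have hcompl : (1 - F) * p * (1 - F) ≤ 1 - F := by
    simpa only [mul_one, hF'.isIdempotentElem.eq] using
      hF'.isSelfAdjoint.conjugate_le_conjugate hp1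
  calc p ≤ 2 * (F * p * F) + 2 * ((1 - F) * p * (1 - F)) := by
        simpa only [add_sub_cancel, star_one, one_mul, mul_one, hF.isSelfAdjoint.star_eq,
          hF'.isSelfAdjoint.star_eq] using conjugate_add_le hp0 F (1 - F)
    _ ≤ 2 * (F * p * F) + 2 * (1 - F) := by
        simp only [two_mul]
        gcongr

variable {m : Type*} [Fintype m]

theorem trace_mul_nonneg {𝕜 : Type*} [RCLike 𝕜] {A B : Matrix m m 𝕜} (hA : 0 ≤ A) (hB : 0 ≤ B) :
    0 ≤ (A * B).trace := by
  obtain ⟨C, rfl⟩ := CStarAlgebra.nonneg_iff_eq_star_mul_self.1 hA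
  rw [Matrix.mul_assoc, Matrix.trace_mul_comm]
  exact (star_right_conjugate_nonneg hB C).posSemidef.trace_nonneg

theorem trace_mul_le_trace_mul_left {𝕜 : Type*} [RCLike 𝕜] {A B C : Matrix m m 𝕜} (hA : 0 ≤ A)
    (hBC : B ≤ C) : (A * B).trace ≤ (A * C).trace := by
  have h := trace_mul_nonneg hA (sub_nonneg.2 hBC)
  rwa [Matrix.mul_sub, Matrix.trace_sub, sub_nonneg] at h

theorem trace_mul_le_trace_mul_right {𝕜 : Type*} [RCLike 𝕜] {A B C : Matrix m m 𝕜} (hA : 0 ≤ A)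
    (hBC : B ≤ C) : (B * A).trace ≤ (C * A).trace := by
  simpa only [Matrix.trace_mul_comm _ A] using trace_mul_le_trace_mul_left hA hBC

variable [DecidableEq m]

theorem re_trace_mul_le_of_isStarProjection {ρ σ p F : Matrix m m ℂ} {α β : ℝ} (hρ : 0 ≤ ρ)
    (hα : 0 ≤ α) (hρα : ρ ≤ α • 1) (hF : IsStarProjection F) (hβ : 0 < β) (hσβ : β • F ≤ σ)
    (hp0 : 0 ≤ p) (hp1 : p ≤ 1) :
    (ρ * p).trace.re ≤ 2 * (ρ * (1 - F)).trace.re + 2 * (α / β) * (σ * p).trace.re := by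
  have htyp : (ρ * (F * p * F)).trace.re ≤ α * (F * p).trace.re := by
    have hle : F * ρ * F ≤ α • F := by
      simpa [hF.isIdempotentElem.eq] using hF.isSelfAdjoint.conjugate_le_conjugate hρα
    calc (ρ * (F * p * F)).trace.re = (F * ρ * F * p).trace.re := by
          rw [← Matrix.mul_assoc, Matrix.trace_mul_comm]
          simp only [Matrix.mul_assoc]
      _ ≤ (α • F * p).trace.re := Complex.re_le_re (trace_mul_le_trace_mul_right hp0 hle)
      _ = α * (F * p).trace.re := by simp
  have hσ : β * (F * p).trace.re ≤ (σ * p).trace.re := by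
    simpa using Complex.re_le_re (trace_mul_le_trace_mul_right hp0 hσβ)
  calc (ρ * p).trace.re
      ≤ (ρ * (2 * (F * p * F) + 2 * (1 - F))).trace.re :=
        Complex.re_le_re <| trace_mul_le_trace_mul_left hρ <|
          le_two_mul_conjugate_add_two_mul_one_sub hp0 hp1 hF
    _ = 2 * (ρ * (1 - F)).trace.re + 2 * (ρ * (F * p * F)).trace.re := by
        simp only [two_mul, Matrix.mul_add, Matrix.trace_add, Complex.add_re]
        ring
    _ ≤ 2 * (ρ * (1 - F)).trace.re + 2 * (α / β) * (σ * p).trace.re := by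
        have : α * (F * p).trace.re ≤ α / β * (σ * p).trace.re := by
          rw [div_mul_eq_mul_div, le_div_iff₀ hβ]
          linarith [mul_le_mul_of_nonneg_left hσ hα]
        linarith

end OneShot

section Spectral

variable {m : Type*} [Fintype m]

/-- The Born-rule probability of the outcome `j` when the state `A` is measured in the basis formed
by the columns of `V`. -/
noncomputable def bornProb (A V : Matrix m m ℂ) (j : m) : ℝ :=
  ((star V * A * V) j j).re

theorem coe_bornProb {A : Matrix m m ℂ} (hA : A.IsHermitian) (V : Matrix m m ℂ) (j : m) :
    (bornProb A V j : ℂ) = (star V * A * V) j j :=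
  (isHermitian_conjTranspose_mul_mul V hA).coe_re_apply_self j

theorem bornProb_nonneg {A : Matrix m m ℂ} (hA : 0 ≤ A) (V : Matrix m m ℂ) (j : m) :
    0 ≤ bornProb A V j :=
  (Complex.le_def.1 (star_left_conjugate_nonneg hA V).posSemidef.diag_nonneg).1

variable [DecidableEq m]

/-- The Hermitian matrix with real eigenvalues `f` and eigenvectors the columns of `U`, when `U` is
unitary. -/
noncomputable def conjDiagonal (U : Matrix m m ℂ) (f : m → ℝ) : Matrix m m ℂ :=
  U * diagonal (fun i => (f i : ℂ)) * star U

theorem conjDiagonal_sub (U : Matrix m m ℂ) (f g : m → ℝ) :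
    conjDiagonal U (f - g) = conjDiagonal U f - conjDiagonal U g := by
  simp only [conjDiagonal, Pi.sub_apply, Complex.ofReal_sub, ← diagonal_sub, Matrix.mul_sub,
    Matrix.sub_mul]

theorem conjDiagonal_smul (U : Matrix m m ℂ) (c : ℝ) (f : m → ℝ) :
    conjDiagonal U (c • f) = c • conjDiagonal U f := by
  have : (diagonal fun i => ((c • f) i : ℂ)) = c • diagonal fun i => (f i : ℂ) := by
    rw [← diagonal_smul]
    congr 1
    ext i
    simp
  rw [conjDiagonal, this, Matrix.mul_smul, Matrix.smul_mul, conjDiagonal]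

theorem conjDiagonal_one {U : Matrix m m ℂ} (hU : U ∈ unitaryGroup m ℂ) : conjDiagonal U 1 = 1 := by
  simp [conjDiagonal, Unitary.mul_star_self_of_mem hU]

theorem conjDiagonal_mul {U : Matrix m m ℂ} (hU : U ∈ unitaryGroup m ℂ) (f g : m → ℝ) :
    conjDiagonal U f * conjDiagonal U g = conjDiagonal U (f * g) := by
  simp only [conjDiagonal, Matrix.mul_assoc, Pi.mul_apply, Complex.ofReal_mul,
    ← diagonal_mul_diagonal]
  rw [← Matrix.mul_assoc (star U) U, Unitary.star_mul_self_of_mem hU, Matrix.one_mul]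

theorem conjDiagonal_nonneg (U : Matrix m m ℂ) {f : m → ℝ} (hf : 0 ≤ f) : 0 ≤ conjDiagonal U f :=
  star_right_conjugate_nonneg
    (PosSemidef.diagonal fun i => Complex.zero_le_real.2 (hf i)).nonneg U

theorem conjDiagonal_mono (U : Matrix m m ℂ) {f g : m → ℝ} (hfg : f ≤ g) :
    conjDiagonal U f ≤ conjDiagonal U g := by
  rw [← sub_nonneg, ← conjDiagonal_sub]
  exact conjDiagonal_nonneg U (sub_nonneg.2 hfg)

theorem isStarProjection_conjDiagonal_indicator {U : Matrix m m ℂ} (hU : U ∈ unitaryGroup m ℂ)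
    (S : Set m) : IsStarProjection (conjDiagonal U (S.indicator 1)) where
  isIdempotentElem := by
    rw [IsIdempotentElem, conjDiagonal_mul hU, ← Set.inter_indicator_one, Set.inter_self]
  isSelfAdjoint := .of_nonneg
    (conjDiagonal_nonneg U fun _ => Set.indicator_nonneg (fun _ _ => zero_le_one) _)

theorem conjDiagonal_eigenvalues {A : Matrix m m ℂ} (hA : A.IsHermitian) :
    conjDiagonal hA.eigenvectorUnitary hA.eigenvalues = A :=
  hA.spectral_theorem.symm

theorem matLog2_eq_conjDiagonal {A : Matrix m m ℂ} (hA : A.IsHermitian) :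
    matLog2 A = conjDiagonal hA.eigenvectorUnitary fun i => Real.logb 2 (hA.eigenvalues i) :=
  dif_pos hA

theorem re_trace_mul_conjDiagonal (A V : Matrix m m ℂ) (f : m → ℝ) :
    (A * conjDiagonal V f).trace.re = ∑ j, bornProb A V j * f j := by
  rw [conjDiagonal, ← Matrix.mul_assoc, Matrix.trace_mul_comm]
  simp only [← Matrix.mul_assoc, Matrix.trace, Matrix.diag_apply, Matrix.mul_diagonal,
    Complex.re_sum, Complex.re_mul_ofReal, bornProb]

theorem sum_bornProb (A : Matrix m m ℂ) {V : Matrix m m ℂ} (hV : V ∈ unitaryGroup m ℂ) :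
    ∑ j, bornProb A V j = A.trace.re := by
  simpa [conjDiagonal_one hV] using (re_trace_mul_conjDiagonal A V 1).symm

theorem bornProb_conjDiagonal_self {U : Matrix m m ℂ} (hU : U ∈ unitaryGroup m ℂ) (f : m → ℝ) :
    bornProb (conjDiagonal U f) U = f := by
  ext j
  have h : star U * conjDiagonal U f * U = diagonal fun i => (f i : ℂ) := by
    simp only [conjDiagonal, Matrix.mul_assoc, Unitary.star_mul_self_of_mem hU, Matrix.mul_one]
    rw [← Matrix.mul_assoc, Unitary.star_mul_self_of_mem hU, Matrix.one_mul]
  simp [bornProb, h]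

theorem bornProb_eigenvectorUnitary {A : Matrix m m ℂ} (hA : A.IsHermitian) :
    bornProb A hA.eigenvectorUnitary = hA.eigenvalues := by
  simpa only [conjDiagonal_eigenvalues] using
    bornProb_conjDiagonal_self hA.eigenvectorUnitary.2 hA.eigenvalues

theorem SuppLe.bornProb_eq_zero {ρ σ : Matrix m m ℂ} (h : SuppLe ρ σ) (hσ : σ.IsHermitian) {j : m}
    (hj : hσ.eigenvalues j = 0) : bornProb ρ hσ.eigenvectorUnitary j = 0 := by
  have hker : σ *ᵥ (hσ.eigenvectorUnitary : Matrix m m ℂ).col j = 0 := by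
    rw [hσ.eigenvectorUnitary_col_eq, hσ.mulVec_eigenvectorBasis, hj, zero_smul]
  have hcol (i : m) : (ρ * (hσ.eigenvectorUnitary : Matrix m m ℂ)) i j = 0 := congrFun (h _ hker) i
  simp [bornProb, Matrix.mul_assoc, Matrix.mul_apply (N := ρ * _), hcol]

theorem qRelEnt_eq_sum_sub_sum {ρ σ : Matrix m m ℂ} (hρ : ρ.IsHermitian) (hσ : σ.IsHermitian) :
    qRelEnt ρ σ = ∑ i, hρ.eigenvalues i * Real.logb 2 (hρ.eigenvalues i) -
      ∑ j, bornProb ρ hσ.eigenvectorUnitary j * Real.logb 2 (hσ.eigenvalues j) := by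
  rw [qRelEnt, Matrix.mul_sub, Matrix.trace_sub, Complex.sub_re, matLog2_eq_conjDiagonal hρ,
    matLog2_eq_conjDiagonal hσ, re_trace_mul_conjDiagonal, re_trace_mul_conjDiagonal,
    bornProb_eigenvectorUnitary]

theorem re_trace_conjDiagonal_indicator_mul_le {U p : Matrix m m ℂ} (hU : U ∈ unitaryGroup m ℂ)
    {l : m → ℝ} (hl : 0 ≤ l) (hp1 : p ≤ 1) (S : Set m) :
    (conjDiagonal U (S.indicator l) * p).trace.re ≤ ∑ x with x ∈ S, l x :=
  calc (conjDiagonal U (S.indicator l) * p).trace.re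
      ≤ (conjDiagonal U (S.indicator l) * 1).trace.re :=
        Complex.re_le_re <| trace_mul_le_trace_mul_left
          (conjDiagonal_nonneg U (Set.indicator_nonneg fun x _ => hl x)) hp1
    _ = ∑ x with x ∈ S, l x := by
        rw [Matrix.mul_one, ← sum_bornProb _ hU, bornProb_conjDiagonal_self hU, Finset.sum_filter]
        simp only [Set.indicator_apply]

theorem conjDiagonal_indicator_le_smul_one {U : Matrix m m ℂ} (hU : U ∈ unitaryGroup m ℂ)
    (l : m → ℝ) {α : ℝ} (hα : 0 ≤ α) : conjDiagonal U ({x | l x ≤ α}.indicator l) ≤ α • 1 := by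
  rw [← conjDiagonal_one hU, ← conjDiagonal_smul]
  exact conjDiagonal_mono U fun x => by
    by_cases hx : l x ≤ α
    · simp [hx]
    · simpa [hx] using hα

theorem smul_conjDiagonal_indicator_le (V : Matrix m m ℂ) {s : m → ℝ} (hs : 0 ≤ s) (β : ℝ) :
    β • conjDiagonal V ({y | β ≤ s y}.indicator 1) ≤ conjDiagonal V s := by
  rw [← conjDiagonal_smul]
  exact conjDiagonal_mono V fun y => by
    by_cases hy : β ≤ s y
    · simp [hy]
    · simpa [hy] using hs y

theorem re_trace_conjDiagonal_mul_le {U V p : Matrix m m ℂ} (hU : U ∈ unitaryGroup m ℂ)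
    (hV : V ∈ unitaryGroup m ℂ) {l s : m → ℝ} (hl : 0 ≤ l) (hs : 0 ≤ s) {α β : ℝ} (hα : 0 ≤ α)
    (hβ : 0 < β) (hp0 : 0 ≤ p) (hp1 : p ≤ 1) :
    (conjDiagonal U l * p).trace.re ≤ ∑ x with α < l x, l x +
      2 * ∑ y with s y < β, bornProb (conjDiagonal U l) V y +
      2 * (α / β) * (conjDiagonal V s * p).trace.re := by
  let L : Set m := {x | l x ≤ α}
  let F := conjDiagonal V ({y | β ≤ s y}.indicator 1)
  have hF : IsStarProjection F := isStarProjection_conjDiagonal_indicator hV _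
  have hlarge : (conjDiagonal U (Lᶜ.indicator l) * p).trace.re ≤ ∑ x with α < l x, l x := by
    simpa [L] using re_trace_conjDiagonal_indicator_mul_le hU hl hp1 Lᶜ
  have hsmall := re_trace_mul_le_of_isStarProjection
    (conjDiagonal_nonneg U (Set.indicator_nonneg fun x _ => hl x)) hα
    (conjDiagonal_indicator_le_smul_one hU l hα) hF hβ (smul_conjDiagonal_indicator_le V hs β)
    hp0 hp1
  have hmiss : (conjDiagonal U (L.indicator l) * (1 - F)).trace.re ≤
      ∑ y with s y < β, bornProb (conjDiagonal U l) V y :=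
    calc (conjDiagonal U (L.indicator l) * (1 - F)).trace.re
        ≤ (conjDiagonal U l * (1 - F)).trace.re :=
          Complex.re_le_re <| trace_mul_le_trace_mul_right hF.one_sub.nonneg <|
            conjDiagonal_mono U (Set.indicator_le_self' fun x _ => hl x)
      _ = ∑ y with s y < β, bornProb (conjDiagonal U l) V y := by
          rw [← conjDiagonal_one hV, ← conjDiagonal_sub, ← Set.indicator_compl,
            re_trace_mul_conjDiagonal, Finset.sum_filter]
          simp [Set.indicator_apply]
  have hsplit : (conjDiagonal U l * p).trace.re = (conjDiagonal U (L.indicator l) * p).trace.re +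
      (conjDiagonal U (Lᶜ.indicator l) * p).trace.re := by
    rw [Set.indicator_compl, conjDiagonal_sub, Matrix.sub_mul, Matrix.trace_sub, Complex.sub_re,
      add_sub_cancel]
  linarith

end Spectral

section TensorPower

variable {d : ℕ}

theorem tpow_mul (A B : Matrix (Fin d) (Fin d) ℂ) (n : ℕ) :
    tpow (A * B) n = tpow A n * tpow B n := by
  ext x y
  simp only [tpow, Matrix.of_apply, Matrix.mul_apply, Fintype.prod_sum, Finset.prod_mul_distrib]

theorem tpow_star (A : Matrix (Fin d) (Fin d) ℂ) (n : ℕ) : tpow (star A) n = star (tpow A n) := by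
  ext x y
  simp [tpow]

theorem tpow_diagonal (f : Fin d → ℂ) (n : ℕ) :
    tpow (diagonal f) n = diagonal fun x => ∏ i, f (x i) := by
  ext x y
  simp only [tpow, Matrix.of_apply, Matrix.diagonal_apply]
  split_ifs with h
  · simp [h]
  · obtain ⟨i, hi⟩ := Function.ne_iff.1 h
    exact Finset.prod_eq_zero (Finset.mem_univ i) (if_neg hi)

theorem tpow_one (n : ℕ) : tpow (1 : Matrix (Fin d) (Fin d) ℂ) n = 1 := by
  rw [← diagonal_one, tpow_diagonal, ← diagonal_one]
  simp

theorem tpow_mem_unitaryGroup {U : Matrix (Fin d) (Fin d) ℂ} (hU : U ∈ unitaryGroup (Fin d) ℂ)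
    (n : ℕ) : tpow U n ∈ unitaryGroup (Fin n → Fin d) ℂ := by
  rw [mem_unitaryGroup_iff, ← tpow_star, ← tpow_mul, mem_unitaryGroup_iff.1 hU, tpow_one]

theorem tpow_nonneg {A : Matrix (Fin d) (Fin d) ℂ} (hA : 0 ≤ A) (n : ℕ) : 0 ≤ tpow A n := by
  obtain ⟨B, rfl⟩ := CStarAlgebra.nonneg_iff_eq_star_mul_self.1 hA
  rw [tpow_mul, tpow_star]
  exact star_mul_self_nonneg _

theorem tpow_conjDiagonal (U : Matrix (Fin d) (Fin d) ℂ) (f : Fin d → ℝ) (n : ℕ) :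
    tpow (conjDiagonal U f) n = conjDiagonal (tpow U n) fun x => ∏ i, f (x i) := by
  simp only [conjDiagonal, tpow_mul, tpow_star, tpow_diagonal, Complex.ofReal_prod]

theorem bornProb_tpow {A : Matrix (Fin d) (Fin d) ℂ} (hA : A.IsHermitian)
    (V : Matrix (Fin d) (Fin d) ℂ) (n : ℕ) (x : Fin n → Fin d) :
    bornProb (tpow A n) (tpow V n) x = ∏ i, bornProb A V (x i) := by
  rw [bornProb, ← tpow_star, ← tpow_mul, ← tpow_mul, ← Complex.ofReal_re (∏ i, _),
    Complex.ofReal_prod]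
  simp only [coe_bornProb hA, tpow, Matrix.of_apply]

theorem re_trace_tpow_mul_le {ρ σ : Matrix (Fin d) (Fin d) ℂ} (hρ : ρ.PosSemidef)
    (hσ : σ.PosSemidef) {n : ℕ} {p : Matrix (Fin n → Fin d) (Fin n → Fin d) ℂ} (hp0 : 0 ≤ p)
    (hp1 : p ≤ 1) {α β : ℝ} (hα : 0 ≤ α) (hβ : 0 < β) :
    (tpow ρ n * p).trace.re ≤
      ∑ x : Fin n → Fin d with α < ∏ i, hρ.1.eigenvalues (x i), ∏ i, hρ.1.eigenvalues (x i) +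
      2 * ∑ y : Fin n → Fin d with ∏ i, hσ.1.eigenvalues (y i) < β,
        ∏ i, bornProb ρ hσ.1.eigenvectorUnitary (y i) +
      2 * (α / β) * (tpow σ n * p).trace.re := by
  have h := re_trace_conjDiagonal_mul_le
    (tpow_mem_unitaryGroup hρ.1.eigenvectorUnitary.2 n)
    (tpow_mem_unitaryGroup hσ.1.eigenvectorUnitary.2 n)
    (l := fun x => ∏ i, hρ.1.eigenvalues (x i)) (s := fun y => ∏ i, hσ.1.eigenvalues (y i))
    (fun _ => Finset.prod_nonneg fun _ _ => hρ.eigenvalues_nonneg _)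
    (fun _ => Finset.prod_nonneg fun _ _ => hσ.eigenvalues_nonneg _) hα hβ hp0 hp1
  simpa only [← tpow_conjDiagonal, conjDiagonal_eigenvalues, bornProb_tpow hρ.1] using h

end TensorPower

section Asymptotics

theorem IsDensity.sum_bornProb_eq_one {m : Type*} [Fintype m] [DecidableEq m] {ρ V : Matrix m m ℂ}
    (hρ : IsDensity ρ) (hV : V ∈ unitaryGroup m ℂ) : ∑ j, bornProb ρ V j = 1 := by
  rw [sum_bornProb ρ hV, hρ.2, Complex.one_re]

theorem eventually_le_rpow_natCast_mul {a : ℝ} (ha : 1 < a) {ε : ℝ} (hε : 0 < ε) (C : ℝ) :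
    ∀ᶠ n : ℕ in atTop, C ≤ a ^ (n * ε) :=
  ((tendsto_rpow_atTop_of_base_gt_one a ha).comp
    (tendsto_natCast_atTop_atTop.atTop_mul_const hε)).eventually_ge_atTop C

theorem eventually_mul_rpow_le_re_trace_tpow_mul {d : ℕ} {ρ σ : Matrix (Fin d) (Fin d) ℂ}
    (hρ : IsDensity ρ) (hσ : σ.PosSemidef) (hsupp : SuppLe ρ σ)
    {p : (n : ℕ) → Matrix (Fin n → Fin d) (Fin n → Fin d) ℂ} (hp0 : ∀ n, 0 ≤ p n)
    (hp1 : ∀ n, p n ≤ 1) {c : ℝ} (hc : 0 < c)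
    (hcp : ∀ᶠ n in atTop, c < (tpow ρ n * p n).trace.re) {b : ℝ} (hb : b < -qRelEnt ρ σ) :
    ∀ᶠ n : ℕ in atTop, c / 4 * 2 ^ (n * b) ≤ (tpow σ n * p n).trace.re := by
  set l := hρ.1.1.eigenvalues
  set s := hσ.1.eigenvalues
  set v := bornProb ρ hσ.1.eigenvectorUnitary
  set A := ∑ i, l i * Real.logb 2 (l i)
  set T := ∑ j, v j * Real.logb 2 (s j)
  obtain ⟨ε, hε, hbε⟩ : ∃ ε, 0 < ε ∧ b = T - A - 2 * ε := by
    rw [qRelEnt_eq_sum_sub_sum hρ.1.1 hσ.1] at hb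
    exact ⟨(T - A - b) / 2, by linarith, by ring⟩
  have hl1 : ∑ i, l i = 1 := by
    simpa only [bornProb_eigenvectorUnitary] using
      hρ.sum_bornProb_eq_one hρ.1.1.eigenvectorUnitary.2
  have hv1 : ∑ j, v j = 1 := hρ.sum_bornProb_eq_one hσ.1.eigenvectorUnitary.2
  have hlarge := (tendsto_sum_prod_of_rpow_lt_prod hρ.1.eigenvalues_nonneg hl1
    (lt_add_of_pos_right A hε)).eventually (gt_mem_nhds (show 0 < c / 4 by positivity))
  have hsmall := (tendsto_sum_prod_of_prod_lt_rpow (bornProb_nonneg hρ.1.nonneg _) hv1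
    hσ.eigenvalues_nonneg (fun j => hsupp.bornProb_eq_zero hσ.1)
    (sub_lt_self T hε)).eventually (gt_mem_nhds (show 0 < c / 8 by positivity))
  filter_upwards [hcp, hlarge, hsmall] with n hcn hlarge_n hsmall_n
  set t := (tpow σ n * p n).trace.re
  have hratio : (2 : ℝ) ^ (n * (A + ε)) / 2 ^ (n * (T - ε)) = (2 ^ (n * b))⁻¹ := by
    rw [← Real.rpow_sub two_pos, ← Real.rpow_neg zero_le_two, hbε]
    ring_nf
  have hbound : c / 4 ≤ (2 ^ (n * b))⁻¹ * t := by
    have := re_trace_tpow_mul_le hρ.1 hσ (hp0 n) (hp1 n)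
      (Real.rpow_pos_of_pos two_pos (n * (A + ε))).le
      (Real.rpow_pos_of_pos two_pos (n * (T - ε)))
    rw [hratio] at this
    linarith
  rwa [le_inv_mul_iff₀' (by positivity)] at hbound

theorem eventually_rpow_le_re_trace_tpow_mul {d : ℕ} {ρ σ : Matrix (Fin d) (Fin d) ℂ}
    (hρ : IsDensity ρ) (hσ : σ.PosSemidef) (hsupp : SuppLe ρ σ)
    {p : (n : ℕ) → Matrix (Fin n → Fin d) (Fin n → Fin d) ℂ} (hp0 : ∀ n, 0 ≤ p n)
    (hp1 : ∀ n, p n ≤ 1) {c : ℝ} (hc : 0 < c)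
    (hcp : ∀ᶠ n in atTop, c < (tpow ρ n * p n).trace.re) {b : ℝ} (hb : b < -qRelEnt ρ σ) :
    ∀ᶠ n : ℕ in atTop, (2 : ℝ) ^ (n * b) ≤ (tpow σ n * p n).trace.re := by
  obtain ⟨b', hbb', hb'⟩ := exists_between hb
  filter_upwards [eventually_mul_rpow_le_re_trace_tpow_mul hρ hσ hsupp hp0 hp1 hc hcp hb',
    eventually_le_rpow_natCast_mul one_lt_two (sub_pos.2 hbb') (4 / c)] with n hn hgrowth
  calc (2 : ℝ) ^ (n * b) = c / 4 * (4 / c) * 2 ^ (n * b) := by field_simp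
    _ ≤ c / 4 * 2 ^ (n * (b' - b)) * 2 ^ (n * b) := by gcongr
    _ = c / 4 * 2 ^ (n * b') := by
        rw [mul_assoc, ← Real.rpow_add two_pos]
        ring_nf
    _ ≤ (tpow σ n * p n).trace.re := hn

theorem le_elog2_mul_inv {n : ℕ} (hn : n ≠ 0) {b t : ℝ} (h : (2 : ℝ) ^ (n * b) ≤ t) :
    (b : EReal) ≤ elog2 t * ((n : ℝ)⁻¹ : ℝ) := by
  have ht : 0 < t := (Real.rpow_pos_of_pos two_pos _).trans_le h
  have hn0 : (0 : ℝ) < n := by positivity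
  rw [elog2, if_neg ht.not_ge, ← EReal.coe_mul, EReal.coe_le_coe_iff, ← div_eq_mul_inv,
    le_div_iff₀' hn0, Real.le_logb_iff_rpow_le one_lt_two ht]
  exact h

theorem quantum_stein_lower_bound_general {d : ℕ} {ρ σ : Matrix (Fin d) (Fin d) ℂ}
    (hρ : IsDensity ρ) (hσ : σ.PosSemidef)
    {p : (n : ℕ) → Matrix (Fin n → Fin d) (Fin n → Fin d) ℂ} (hp0 : ∀ n, 0 ≤ p n)
    (hp1 : ∀ n, p n ≤ 1) (h : 0 < liminf (fun n : ℕ => (tpow ρ n * p n).trace.re) atTop) :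
    -qRelEntE ρ σ ≤
      liminf (fun n : ℕ => elog2 (tpow σ n * p n).trace.re * ((n : ℝ)⁻¹ : ℝ)) atTop := by
  by_cases hsupp : SuppLe ρ σ
  swap
  · simp [qRelEntE, hsupp]
  have hbdd : IsBoundedUnder (· ≥ ·) atTop fun n => (tpow ρ n * p n).trace.re :=
    isBoundedUnder_of ⟨0, fun n =>
      (Complex.le_def.1 (trace_mul_nonneg (tpow_nonneg hρ.1.nonneg n) (hp0 n))).1⟩
  obtain ⟨c, hc, hcl⟩ := exists_between h
  rw [qRelEntE, if_pos hsupp, ← EReal.coe_neg, ← EReal.ge_of_forall_gt_iff_ge]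
  intro b hb
  have hev := eventually_rpow_le_re_trace_tpow_mul hρ hσ hsupp hp0 hp1 hc
    (eventually_lt_of_lt_liminf hcl hbdd) (EReal.coe_lt_coe_iff.1 hb)
  refine le_liminf_of_le (by isBoundedDefault) ?_
  filter_upwards [hev, eventually_ne_atTop 0] with n hn hn0
  exact le_elog2_mul_inv hn0 hn

end Asymptotics

theorem IsProjn.isStarProjection {m : Type*} [Fintype m] {p : Matrix m m ℂ} (hp : IsProjn p) :
    IsStarProjection p :=
  ⟨hp.2, hp.1⟩

/-- Quantum Stein lower bound: if `liminf tr(ρ^{⊗n} pₙ) > 0` for a sequence of projections,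
then `liminf (1/n) log tr(σ^{⊗n} pₙ) ≥ −S(ρ,σ)` (in `EReal`, `S` possibly infinite). -/
theorem quantum_stein_lower_bound (d : ℕ) (ρ σ : Matrix (Fin d) (Fin d) ℂ)
    (hρ : IsDensity ρ) (hσ : IsDensity σ)
    (p : (n : ℕ) → Matrix (Fin n → Fin d) (Fin n → Fin d) ℂ)
    (hp : ∀ n, IsProjn (p n))
    (h : 0 < Filter.liminf (fun n : ℕ => ((tpow ρ n * p n).trace).re) atTop) :
    -(qRelEntE ρ σ) ≤
      Filter.liminf
        (fun n : ℕ => elog2 (((tpow σ n * p n).trace).re) * (((n : ℝ)⁻¹ : ℝ) : EReal))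
        atTop := by
  exact quantum_stein_lower_bound_general hρ hσ.1 (fun n => (hp n).isStarProjection.nonneg)
    (fun n => (hp n).isStarProjection.le_one) h
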